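/- Almost surely, the set of limit points of the sequence of empirical occupation measures (v_n)_{n≥1} is a connected subset of the equilibria set C. -/

import Mathlib

/-!
The regularised occupation measures `w_n(i) = (1 + Z_n(i)) / (n + 1 + N)` stay at distance
`O(1/n)` from `v_n`, lie almost surely in the reduced simplex `Δ` (a vertex without a loop is never
visited twice in a row), and, the transition probabilities being homogeneous of degree `0` in
`1 + Z_n`, satisfy `P(X_{n+1} = j | F_n) = K_{w_n}(X_n, j)` for the kernel
`K_v(i, j) = A_{ij} v_j^α / (A v^α)_i`. This kernel is reversible with respect to `π(v)`, and
`w_{n+1} - w_n = γ_n (e_{X_{n+1}} - w_n)` with `γ_n = 1 / (n + 2 + N)`.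

`H` is a strict Lyapunov function: `⟨∇H(v), F(v)⟩ = (2α / H(v)) ∑ v_i (u_i - H(v))²` with
`u_i = v_i^{α-1} (A v^α)_i`, which is nonnegative and vanishes only at zeros of `F`
(`drift_eq`, `Ffield_eq_zero_of_drift`). The main point is that almost surely
`∑ γ_n ⟨∇H, F⟩(w_n) < ∞` (`summable_drift`). Expand `H(w_{n+1}) - H(w_n)` to first order. The
noise `∇H(w_n)·(e_{X_{n+1}} - π(w_n))` is rewritten by a solution `g` of the Poisson equation
`g - K_v g = ∇H - π(v)(∇H)` as the sum of a martingale increment, a telescoping term, and an error.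
The solution is `g = (1 - K_v + 1 ⊗ π(v))⁻¹ ∇H(v)`, the matrix being invertible on all of `Δ`
because harmonic functions of `K_v` are constant. All functions involved are algebraic in `v_i`
and `v_i^{α-1}`, hence `β`-Hölder on the compact set `Δ` for some `β > 0`; so the
Taylor remainder and the error are `O(γ_n^{1+β} + γ_n²)`, which is summable. The weighted
martingale is bounded in `L²` and so almost surely bounded (`ae_bounded_weighted_sum`).
As `H` is bounded, the nonnegative series has bounded partial sums.

Since `∑ γ_n = ∞` and `w` moves by at most `γ_n` at step `n`, a limit point with positive drift
would trap the sequence near it and make the series diverge (`eq_zero_of_mapClusterPt`).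
This argument needs no Sard-type condition on the critical values of `H`. Connectedness
holds for any sequence in a compact set with increments tending to `0`
(`clusterSet_isConnected`).
-/

open MeasureTheory Filter Set Matrix

/-- `H(v) = ⟨A v^α, v^α⟩`. -/
noncomputable def Hfun {N : ℕ} (A : Matrix (Fin N) (Fin N) ℝ) (α : ℝ)
    (v : Fin N → ℝ) : ℝ :=
  ∑ i, ∑ j, A i j * v i ^ α * v j ^ α

/-- `π_i(v) = v_i^α (A v^α)_i / H(v)`. -/
noncomputable def piFun {N : ℕ} (A : Matrix (Fin N) (Fin N) ℝ) (α : ℝ)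
    (v : Fin N → ℝ) : Fin N → ℝ :=
  fun i => v i ^ α * (∑ j, A i j * v j ^ α) / Hfun A α v

/-- The vector field `F(v) = -v + π(v)`. -/
noncomputable def Ffield {N : ℕ} (A : Matrix (Fin N) (Fin N) ℝ) (α : ℝ)
    (v : Fin N → ℝ) : Fin N → ℝ :=
  fun i => piFun A α v i - v i

/-- The reduced simplex `Δ`. -/
def simplexD {N : ℕ} (A : Matrix (Fin N) (Fin N) ℝ) : Set (Fin N → ℝ) :=
  {v | (∀ i, 0 ≤ v i) ∧ (∑ i, v i = 1) ∧ ∀ i, A i i = 0 → v i ≤ 3 / 4}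

open scoped Topology

/-! ### Limit sets of slowly moving sequences -/

/-- If the cluster set split into two disjoint closed pieces, a Urysohn function separating them
would take values in `[1/3, 2/3]` infinitely often along the sequence, which yields a cluster point
in neither piece. -/
lemma clusterSet_isConnected {E : Type*} [MetricSpace E] {K : Set E} (hK : IsCompact K)
    {u : ℕ → E} (hu : ∀ n, u n ∈ K)
    (hstep : Tendsto (fun n => dist (u (n + 1)) (u n)) atTop (𝓝 0)) :
    IsConnected {p : E | MapClusterPt p atTop u} := by
  have hclosed : IsClosed {p : E | MapClusterPt p atTop u} := isClosed_setOfPred_clusterPt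
  refine ⟨?_, ?_⟩
  · obtain ⟨p, -, hp⟩ := hK.exists_mapClusterPt (f := atTop) (u := u) (by simp [hu])
    exact ⟨p, hp⟩
  rw [isPreconnected_closed_iff]
  rintro t t' ht ht' hsub ⟨p, hpS, hpt⟩ ⟨q, hqS, hqt⟩
  by_contra hne
  rw [Set.not_nonempty_iff_eq_empty] at hne
  set S := {p : E | MapClusterPt p atTop u}
  have hdisj : Disjoint (S ∩ t) (S ∩ t') := by
    rw [Set.disjoint_iff_inter_eq_empty, ← Set.inter_inter_distrib_left]
    exact hne
  obtain ⟨φ, h0, h1, -⟩ := exists_continuous_zero_one_of_isClosed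
    (hclosed.inter ht) (hclosed.inter ht') hdisj
  have hφp : φ p = 0 := h0 ⟨hpS, hpt⟩
  have hφq : φ q = 1 := h1 ⟨hqS, hqt⟩
  have huc := hK.uniformContinuousOn_of_continuous φ.continuous.continuousOn
  rw [Metric.uniformContinuousOn_iff] at huc
  obtain ⟨δ, hδ, huc⟩ := huc (1 / 3) (by norm_num)
  obtain ⟨n₁, hn₁⟩ := eventually_atTop.1 (hstep.eventually_lt_const hδ)
  have hp' : ∃ᶠ n in atTop, φ (u n) < 1 / 3 :=
    hpS.frequently (φ.continuous.continuousAt.eventually_lt_const (by rw [hφp]; norm_num))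
  have hq' : ∃ᶠ n in atTop, 2 / 3 < φ (u n) :=
    hqS.frequently (φ.continuous.continuousAt.eventually_const_lt (by rw [hφq]; norm_num))
  have hmid : ∃ᶠ n in atTop, u n ∈ K ∩ φ ⁻¹' (Icc (1 / 3) (2 / 3)) := by
    rw [frequently_atTop]
    intro n₀
    obtain ⟨a, ha, hua⟩ := frequently_atTop.1 hp' (max n₀ n₁)
    obtain ⟨b, hb, hub⟩ := frequently_atTop.1 hq' a
    classical
    have hex : ∃ k, 1 / 3 ≤ φ (u (a + k)) := ⟨b - a, by
      rw [Nat.add_sub_cancel' hb]; linarith⟩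
    have hk := Nat.find_spec hex
    have hkmin := fun m => Nat.find_min hex (m := m)
    set k := Nat.find hex
    have hkpos : k ≠ 0 := by
      intro h
      rw [h] at hk
      simp only [add_zero] at hk
      linarith
    obtain ⟨l, hl⟩ := Nat.exists_eq_succ_of_ne_zero hkpos
    have hl' := hkmin l (by omega)
    rw [hl] at hk
    have hd := huc (u (a + l + 1)) (hu _) (u (a + l)) (hu _) (hn₁ _ (by omega))
    rw [Real.dist_eq, abs_lt] at hd
    refine ⟨a + l + 1, by omega, hu _, hk, ?_⟩
    push Not at hl'
    linarith [hd.2]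
  obtain ⟨z, hz, hzc⟩ := (hK.inter_right (isClosed_Icc.preimage φ.continuous)).exists_mapClusterPt_of_frequently hmid
  rcases hsub hzc with h | h
  · have := h0 ⟨hzc, h⟩
    simp only [Pi.zero_apply] at this
    have := hz.2.1
    linarith
  · have := h1 ⟨hzc, h⟩
    simp only [Pi.one_apply] at this
    have := hz.2.2
    linarith

/-- If `G p > 0`, then from some late visit near `p` on the remaining mass of `∑ γ n * G (w n)` is
too small for `w` to ever leave the region `G > G p / 2`; there `∑ γ n` converges, contradicting
`hdiv`. -/
lemma eq_zero_of_mapClusterPt {E : Type*} [MetricSpace E] {D : Set E}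
    {G : E → ℝ} (hG : ContinuousOn G D) (hG0 : ∀ v ∈ D, 0 ≤ G v)
    {w : ℕ → E} (hw : ∀ n, w n ∈ D) {γ : ℕ → ℝ} (hγ : ∀ n, 0 ≤ γ n)
    (hstep : ∀ n, dist (w n) (w (n + 1)) ≤ γ n) (hdiv : ¬ Summable γ)
    (hsum : Summable fun n => γ n * G (w n)) {p : E} (hpD : p ∈ D)
    (hp : MapClusterPt p atTop w) : G p = 0 := by
  by_contra hne
  have hpos : 0 < G p := lt_of_le_of_ne (hG0 p hpD) (Ne.symm hne)
  set c := G p / 2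
  have hc : 0 < c := by positivity
  have hev : ∀ᶠ v in 𝓝[D] p, c < G v := (hG p hpD).eventually_const_lt (by simp only [c]; linarith)
  rw [eventually_nhdsWithin_iff, Metric.eventually_nhds_iff] at hev
  obtain ⟨r, hr, hball⟩ := hev
  have hterm : ∀ n, 0 ≤ γ n * G (w n) := fun n => mul_nonneg (hγ n) (hG0 _ (hw n))
  have htail := hsum.tendsto_sum_tsum_nat
  have hlt : ∑' n, γ n * G (w n) - c * (r / 2) < ∑' n, γ n * G (w n) := by
    have : 0 < c * (r / 2) := by positivity
    linarith
  obtain ⟨n₀, hn₀⟩ := eventually_atTop.1 (htail.eventually_const_lt hlt)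
  obtain ⟨n, hn, hwn⟩ := frequently_atTop.1
    (hp.frequently (Metric.ball_mem_nhds p (half_pos hr))) n₀
  have htl : ∀ m, ∑ k ∈ Finset.Ico n (n + m), γ k * G (w k) < c * (r / 2) := by
    intro m
    rw [Finset.sum_Ico_eq_sub _ (Nat.le_add_right n m)]
    have h1 := hsum.sum_le_tsum (Finset.range (n + m)) (fun k _ => hterm k)
    have h2 := hn₀ n hn
    linarith
  have hdist : ∀ m, dist (w n) (w (n + m)) ≤ ∑ k ∈ Finset.Ico n (n + m), γ k := fun m =>
    (dist_le_Ico_sum_of_dist_le (Nat.le_add_right n m) (fun {k} _ _ => hstep k))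
  have hmain : ∀ m, c * ∑ k ∈ Finset.Ico n (n + m), γ k
      ≤ ∑ k ∈ Finset.Ico n (n + m), γ k * G (w k) := by
    intro m
    induction m with
    | zero => simp
    | succ m ih =>
      have h1 : ∑ k ∈ Finset.Ico n (n + m), γ k < r / 2 :=
        lt_of_mul_lt_mul_left (ih.trans_lt (htl m)) hc.le
      have h2 : dist (w (n + m)) p < r := by
        have := dist_triangle (w (n + m)) (w n) p
        rw [dist_comm (w (n + m)) (w n)] at this
        have h3 : dist (w n) p < r / 2 := hwn
        linarith [hdist m]
      have h3 := hball h2 (hw _)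
      rw [← add_assoc, Finset.sum_Ico_succ_top (Nat.le_add_right n m),
        Finset.sum_Ico_succ_top (Nat.le_add_right n m), mul_add]
      have := mul_le_mul_of_nonneg_left h3.le (hγ (n + m))
      linarith
  apply hdiv
  rw [← summable_nat_add_iff n]
  refine summable_of_sum_range_le (c := r / 2) (fun k => hγ _) fun m => ?_
  have h := lt_of_mul_lt_mul_left ((hmain m).trans_lt (htl m)) hc.le
  rw [Finset.sum_Ico_eq_sum_range] at h
  simp only [add_tsub_cancel_left] at h
  simpa only [add_comm] using h.le

/-! ### The martingale estimate -/

/-- Sums of conditionally centred bounded increments with predictable, square-summable weights are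
almost surely bounded: they form an `L²`-bounded martingale. -/
lemma ae_bounded_weighted_sum {Ω : Type*} {m0 : MeasurableSpace Ω} {μ : Measure Ω}
    [IsProbabilityMeasure μ] (ℱ : Filtration ℕ m0) {Y p c : ℕ → Ω → ℝ} {b : ℕ → ℝ}
    (hY : ∀ n, Measurable[ℱ (n + 1)] (Y n)) (hY1 : ∀ n ω, |Y n ω| ≤ 1)
    (hp : ∀ n, Measurable[ℱ n] (p n)) (hp1 : ∀ n ω, |p n ω| ≤ 1)
    (hYp : ∀ n, μ[Y n | ℱ n] =ᵐ[μ] p n)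
    (hc : ∀ n, Measurable[ℱ n] (c n)) (hcb : ∀ n ω, |c n ω| ≤ b n)
    (hb : Summable fun n => b n ^ 2) :
    ∀ᵐ ω ∂μ, ∃ C, ∀ m, |∑ n ∈ Finset.range m, c n ω * (Y n ω - p n ω)| ≤ C := by
  set d : ℕ → Ω → ℝ := fun n ω => c n ω * (Y n ω - p n ω) with hd
  set S : ℕ → Ω → ℝ := fun m ω => ∑ n ∈ Finset.range m, d n ω with hS
  have hb0 : ∀ n, 0 ≤ b n := fun n => by
    obtain ⟨ω⟩ := nonempty_of_isProbabilityMeasure μ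
    exact (abs_nonneg _).trans (hcb n ω)
  have hdm : ∀ n, Measurable[ℱ (n + 1)] (d n) := fun n =>
    ((hc n).mono (ℱ.mono n.le_succ) le_rfl).mul
      ((hY n).sub ((hp n).mono (ℱ.mono n.le_succ) le_rfl))
  have hdb : ∀ n ω, |d n ω| ≤ 2 * b n := fun n ω => by
    rw [hd, abs_mul]
    have h1 : |Y n ω - p n ω| ≤ 2 := (abs_sub _ _).trans (by linarith [hY1 n ω, hp1 n ω])
    have := mul_le_mul (hcb n ω) h1 (abs_nonneg _) (hb0 n)
    linarith
  have hSm : ∀ m, Measurable[ℱ m] (S m) := fun m =>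
    Finset.measurable_fun_sum _ fun n hn =>
      (hdm n).mono (ℱ.mono (Finset.mem_range.1 hn)) le_rfl
  have hSb : ∀ m ω, |S m ω| ≤ ∑ n ∈ Finset.range m, 2 * b n := fun m ω =>
    (Finset.abs_sum_le_sum_abs _ _).trans (Finset.sum_le_sum fun n _ => hdb n ω)
  have hInt : ∀ {f : Ω → ℝ} (C : ℝ), Measurable f → (∀ ω, |f ω| ≤ C) → Integrable f μ :=
    fun C hf hfC => Integrable.of_bound hf.aestronglyMeasurable C (ae_of_all _ hfC)
  have hSm' : ∀ m, Measurable (S m) := fun m => (hSm m).mono (ℱ.le m) le_rfl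
  have hdm' : ∀ m, Measurable (d m) := fun m => (hdm m).mono (ℱ.le _) le_rfl
  have hYm' : ∀ m, Measurable (Y m) := fun m => (hY m).mono (ℱ.le _) le_rfl
  have hpm' : ∀ m, Measurable (p m) := fun m => (hp m).mono (ℱ.le _) le_rfl
  have hcm' : ∀ m, Measurable (c m) := fun m => (hc m).mono (ℱ.le _) le_rfl
  have hYi : ∀ n, Integrable (Y n) μ := fun n => hInt 1 (hYm' n) (hY1 n)
  have hpi : ∀ n, Integrable (p n) μ := fun n => hInt 1 (hpm' n) (hp1 n)
  have hdiff : ∀ n, μ[Y n - p n | ℱ n] =ᵐ[μ] 0 := fun n => by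
    have h1 := condExp_sub (hYi n) (hpi n) (ℱ n)
    have h2 := condExp_of_stronglyMeasurable (μ := μ) (ℱ.le n) (hp n).stronglyMeasurable (hpi n)
    filter_upwards [h1, hYp n] with ω h1 h3
    rw [h1, Pi.sub_apply, h2, h3]
    simp
  -- conditional centring survives multiplication by bounded `ℱ n`-measurable factors
  have hpull : ∀ n (e : Ω → ℝ) (C : ℝ), Measurable[ℱ n] e → (∀ ω, |e ω| ≤ C) →
      μ[e * (Y n - p n) | ℱ n] =ᵐ[μ] 0 := fun n e C he heC => by
    have h1 := condExp_stronglyMeasurable_mul_of_bound (ℱ.le n) he.stronglyMeasurable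
      ((hYi n).sub (hpi n)) C (ae_of_all _ heC)
    filter_upwards [h1, hdiff n] with ω h1 h2
    rw [h1, Pi.mul_apply, h2]
    simp
  have hmart : Martingale S ℱ μ := by
    refine martingale_of_condExp_sub_eq_zero_nat
      (fun m => (hSm m).stronglyMeasurable) (fun m => hInt _ (hSm' m) (hSb m)) fun n => ?_
    have : S (n + 1) - S n = c n * (Y n - p n) := by
      ext ω
      simp [hS, Finset.sum_range_succ, hd]
    rw [this]
    exact hpull n (c n) (b n) (hc n) (hcb n)
  have hSsq : ∀ m, Integrable (fun ω => S m ω ^ 2) μ := fun m =>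
    hInt ((∑ n ∈ Finset.range m, 2 * b n) ^ 2) ((hSm' m).pow_const 2) fun ω => by
      rw [abs_pow]
      exact pow_le_pow_left₀ (abs_nonneg _) (hSb m ω) 2
  have hcross : ∀ m, ∫ ω, S m ω * d m ω ∂μ = 0 := fun m => by
    have h := hpull m (S m * c m) ((∑ n ∈ Finset.range m, 2 * b n) * b m)
      ((hSm m).mul (hc m)) fun ω => by
        rw [Pi.mul_apply, abs_mul]
        exact mul_le_mul (hSb m ω) (hcb m ω) (abs_nonneg _)
          ((abs_nonneg _).trans (hSb m ω))
    calc ∫ ω, S m ω * d m ω ∂μ = ∫ ω, (S m * c m * (Y m - p m)) ω ∂μ := by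
          congr 1; ext ω; simp [hd, mul_assoc]
      _ = ∫ ω, (μ[S m * c m * (Y m - p m) | ℱ m]) ω ∂μ := (integral_condExp (ℱ.le m)).symm
      _ = 0 := by rw [integral_congr_ae h]; simp
  have hL2 : ∀ m, ∫ ω, S m ω ^ 2 ∂μ ≤ ∑ n ∈ Finset.range m, 4 * b n ^ 2 := by
    intro m
    induction m with
    | zero => simp [hS]
    | succ m ih =>
      have hdsq : ∀ ω, d m ω ^ 2 ≤ 4 * b m ^ 2 := fun ω => by
        have := pow_le_pow_left₀ (abs_nonneg _) (hdb m ω) 2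
        rw [sq_abs] at this
        linarith
      have hi1 : Integrable (fun ω => S m ω * d m ω) μ :=
        hInt ((∑ n ∈ Finset.range m, 2 * b n) * (2 * b m)) ((hSm' m).mul (hdm' m)) fun ω => by
          rw [abs_mul]
          exact mul_le_mul (hSb m ω) (hdb m ω) (abs_nonneg _)
            ((abs_nonneg _).trans (hSb m ω))
      have hle : ∀ ω, S (m + 1) ω ^ 2 ≤ S m ω ^ 2 + (2 * (S m ω * d m ω) + 4 * b m ^ 2) := by
        intro ω
        have : S (m + 1) ω = S m ω + d m ω := by simp [hS, Finset.sum_range_succ]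
        rw [this]
        nlinarith [hdsq ω]
      have h := integral_mono (hSsq (m + 1))
        ((hSsq m).add ((hi1.const_mul 2).add (integrable_const (4 * b m ^ 2)))) hle
      have h2 : ∫ ω, (S m ω ^ 2 + (2 * (S m ω * d m ω) + 4 * b m ^ 2)) ∂μ
          = ∫ ω, S m ω ^ 2 ∂μ + 4 * b m ^ 2 := by
        have hi2 : Integrable (fun ω => 2 * (S m ω * d m ω) + 4 * b m ^ 2) μ :=
          (hi1.const_mul 2).add (integrable_const _)
        rw [integral_add (hSsq m) hi2,
          integral_add (hi1.const_mul 2) (integrable_const _), integral_const_mul, hcross m]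
        simp
      rw [Finset.sum_range_succ]
      simp only [Pi.add_apply] at h
      linarith [h.trans_eq h2]
  have hL1 : ∀ m, eLpNorm (S m) 1 μ ≤ ((1 + ∑' n, 4 * b n ^ 2).toNNReal : ENNReal) := by
    intro m
    have hi := hInt _ (hSm' m) (hSb m)
    rw [eLpNorm_one_eq_lintegral_enorm, ← ofReal_integral_norm_eq_lintegral_enorm hi]
    refine ENNReal.ofReal_le_ofReal ?_
    have h1 : ∫ ω, ‖S m ω‖ ∂μ ≤ ∫ ω, (1 + S m ω ^ 2) ∂μ :=
      integral_mono hi.norm ((integrable_const 1).add (hSsq m)) fun ω => by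
        simp only [Real.norm_eq_abs]
        nlinarith [sq_abs (S m ω), sq_nonneg (|S m ω| - 1)]
    rw [integral_add (integrable_const 1) (hSsq m)] at h1
    have h2 := (hb.mul_left 4).sum_le_tsum (Finset.range m) fun n _ => by positivity
    simp only [integral_const, probReal_univ, smul_eq_mul, mul_one] at h1
    linarith [hL2 m]
  filter_upwards [hmart.submartingale.exists_ae_tendsto_of_bdd hL1] with ω ⟨l, hl⟩
  obtain ⟨C, hC⟩ := hl.abs.bddAbove_range
  exact ⟨C, fun m => hC ⟨m, rfl⟩⟩

/-! ### Bounded Hölder functions -/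

/-- `φ` is bounded and `β`-Hölder on `D`. On a compact set these functions form an algebra closed
under inversion of nowhere vanishing elements. -/
structure HolderBdd {E : Type*} [PseudoMetricSpace E] (D : Set E) (β : ℝ) (φ : E → ℝ) : Prop where
  bdd : ∃ C, 0 ≤ C ∧ ∀ v ∈ D, |φ v| ≤ C
  holder : ∃ C, 0 ≤ C ∧ ∀ v ∈ D, ∀ w ∈ D, |φ v - φ w| ≤ C * dist v w ^ β

namespace HolderBdd

variable {E : Type*} [PseudoMetricSpace E] {D : Set E} {β : ℝ} {φ ψ : E → ℝ}

lemma congr (h : HolderBdd D β φ) (heq : ∀ v ∈ D, ψ v = φ v) : HolderBdd D β ψ := by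
  obtain ⟨⟨B, hB, h1⟩, C, hC, h2⟩ := h
  refine ⟨⟨B, hB, fun v hv => ?_⟩, C, hC, fun v hv w hw => ?_⟩
  · rw [heq v hv]; exact h1 v hv
  · rw [heq v hv, heq w hw]; exact h2 v hv w hw

lemma const (c : ℝ) : HolderBdd D β fun _ => c :=
  ⟨⟨|c|, abs_nonneg c, fun _ _ => le_rfl⟩, 0, le_rfl, fun _ _ _ _ => by simp⟩

lemma add (hφ : HolderBdd D β φ) (hψ : HolderBdd D β ψ) :
    HolderBdd D β fun v => φ v + ψ v := by
  obtain ⟨⟨B, hB, h1⟩, C, hC, h2⟩ := hφ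
  obtain ⟨⟨B', hB', h1'⟩, C', hC', h2'⟩ := hψ
  refine ⟨⟨B + B', by positivity, fun v hv => (abs_add_le _ _).trans
    (add_le_add (h1 v hv) (h1' v hv))⟩, C + C', by positivity, fun v hv w hw => ?_⟩
  rw [add_sub_add_comm, add_mul]
  exact (abs_add_le _ _).trans (add_le_add (h2 v hv w hw) (h2' v hv w hw))

lemma mul (hφ : HolderBdd D β φ) (hψ : HolderBdd D β ψ) :
    HolderBdd D β fun v => φ v * ψ v := by
  obtain ⟨⟨B, hB, h1⟩, C, hC, h2⟩ := hφ
  obtain ⟨⟨B', hB', h1'⟩, C', hC', h2'⟩ := hψ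
  refine ⟨⟨B * B', by positivity, fun v hv => ?_⟩, B * C' + B' * C, by positivity,
    fun v hv w hw => ?_⟩
  · rw [abs_mul]
    exact mul_le_mul (h1 v hv) (h1' v hv) (abs_nonneg _) hB
  · have : φ v * ψ v - φ w * ψ w = φ v * (ψ v - ψ w) + ψ w * (φ v - φ w) := by ring
    rw [this, add_mul, mul_assoc, mul_assoc]
    refine (abs_add_le _ _).trans (add_le_add ?_ ?_) <;> rw [abs_mul]
    · exact mul_le_mul (h1 v hv) (h2' v hv w hw) (abs_nonneg _) hB
    · exact mul_le_mul (h1' w hw) (h2 v hv w hw) (abs_nonneg _) hB'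

lemma neg (hφ : HolderBdd D β φ) : HolderBdd D β fun v => -φ v :=
  ((const (-1)).mul hφ).congr fun v _ => by ring

lemma sub (hφ : HolderBdd D β φ) (hψ : HolderBdd D β ψ) :
    HolderBdd D β fun v => φ v - ψ v :=
  (hφ.add hψ.neg).congr fun v _ => by ring

lemma sum {ι : Type*} (s : Finset ι) {φ : ι → E → ℝ} (h : ∀ i, HolderBdd D β (φ i)) :
    HolderBdd D β fun v => ∑ i ∈ s, φ i v := by
  classical
  induction s using Finset.induction_on with
  | empty => simpa using const 0
  | insert a s ha ih =>
    simp only [Finset.sum_insert ha]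
    exact (h a).add ih

lemma prod {ι : Type*} (s : Finset ι) {φ : ι → E → ℝ} (h : ∀ i, HolderBdd D β (φ i)) :
    HolderBdd D β fun v => ∏ i ∈ s, φ i v := by
  classical
  induction s using Finset.induction_on with
  | empty => simpa using const 1
  | insert a s ha ih =>
    simp only [Finset.prod_insert ha]
    exact (h a).mul ih

lemma pow (hφ : HolderBdd D β φ) (n : ℕ) : HolderBdd D β fun v => φ v ^ n := by
  have := prod (Finset.range n) (φ := fun _ => φ) (fun _ => hφ)
  simpa using this

lemma continuousOn (hφ : HolderBdd D β φ) (hβ : 0 < β) : ContinuousOn φ D := by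
  obtain ⟨-, C, hC, h⟩ := hφ
  intro v hv
  rw [ContinuousWithinAt, tendsto_iff_dist_tendsto_zero]
  have h0 : Tendsto (fun w => C * dist w v ^ β) (𝓝[D] v) (𝓝 0) := by
    have hd : Tendsto (fun w => dist w v) (𝓝[D] v) (𝓝 0) :=
      tendsto_iff_dist_tendsto_zero.1 (tendsto_id.mono_left nhdsWithin_le_nhds)
    have := (hd.rpow_const (p := β) (Or.inr hβ.le)).const_mul C
    rwa [Real.zero_rpow hβ.ne', mul_zero] at this
  refine squeeze_zero' (Eventually.of_forall fun _ => dist_nonneg) ?_ h0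
  filter_upwards [self_mem_nhdsWithin] with w hw
  rw [Real.dist_eq]
  exact h w hw v hv

lemma inv (hφ : HolderBdd D β φ) (hβ : 0 < β) (hD : IsCompact D) (h0 : ∀ v ∈ D, φ v ≠ 0) :
    HolderBdd D β fun v => (φ v)⁻¹ := by
  obtain ⟨c, hc, hcl⟩ : ∃ c, 0 < c ∧ ∀ v ∈ D, c ≤ |φ v| := by
    rcases D.eq_empty_or_nonempty with rfl | hne
    · exact ⟨1, one_pos, by simp⟩
    · obtain ⟨z, hz, hmin⟩ := hD.exists_isMinOn hne (hφ.continuousOn hβ).abs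
      exact ⟨|φ z|, abs_pos.2 (h0 z hz), fun v hv => hmin hv⟩
  obtain ⟨-, C, hC, h2⟩ := hφ
  refine ⟨⟨c⁻¹, by positivity, fun v hv => ?_⟩, c⁻¹ * c⁻¹ * C, by positivity,
    fun v hv w hw => ?_⟩
  · rw [abs_inv]
    exact inv_anti₀ hc (hcl v hv)
  · have : (φ v)⁻¹ - (φ w)⁻¹ = (φ v)⁻¹ * (φ w)⁻¹ * (φ w - φ v) := by
      have := h0 v hv
      have := h0 w hw
      field_simp
    rw [this, abs_mul, abs_mul, abs_inv, abs_inv, abs_sub_comm, mul_assoc (c⁻¹ * c⁻¹)]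
    refine mul_le_mul (mul_le_mul (inv_anti₀ hc (hcl v hv)) (inv_anti₀ hc (hcl w hw))
      (by positivity) (by positivity)) (h2 v hv w hw) (abs_nonneg _) (by positivity)

lemma det {n : Type*} [Fintype n] [DecidableEq n] {M : E → Matrix n n ℝ}
    (h : ∀ i j, HolderBdd D β fun v => M v i j) : HolderBdd D β fun v => (M v).det := by
  simp only [Matrix.det_apply']
  exact sum _ fun σ => (const _).mul (prod _ fun i => h _ _)

lemma matrix_inv {n : Type*} [Fintype n] [DecidableEq n] {M : E → Matrix n n ℝ}
    (hβ : 0 < β) (hD : IsCompact D)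
    (h : ∀ i j, HolderBdd D β fun v => M v i j) (hdet : ∀ v ∈ D, (M v).det ≠ 0) (i j : n) :
    HolderBdd D β fun v => (M v)⁻¹ i j := by
  simp only [Matrix.inv_def, Ring.inverse_eq_inv', Matrix.smul_apply, smul_eq_mul,
    Matrix.adjugate_apply]
  refine ((det h).inv hβ hD hdet).mul (det fun k l => ?_)
  by_cases hk : k = j
  · subst hk
    simpa using const _
  · simpa [Matrix.updateRow_ne hk] using h k l

end HolderBdd

lemma abs_rpow_sub_rpow_le {β : ℝ} (h0 : 0 ≤ β) (h1 : β ≤ 1) {x y : ℝ} (hx : 0 ≤ x)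
    (hy : 0 ≤ y) : |x ^ β - y ^ β| ≤ |x - y| ^ β := by
  wlog h : y ≤ x generalizing x y
  · rw [abs_sub_comm, abs_sub_comm x]
    exact this hy hx (le_of_not_ge h)
  rw [abs_of_nonneg (sub_nonneg.2 h),
    abs_of_nonneg (sub_nonneg.2 (Real.rpow_le_rpow hy h h0))]
  have := Real.rpow_add_le_add_rpow hy (sub_nonneg.2 h) h0 h1
  rw [add_sub_cancel] at this
  linarith

/-! ### The kernel, the Poisson equation and the Lyapunov function -/

section Model

variable {N : ℕ} {A : Matrix (Fin N) (Fin N) ℝ} {α : ℝ}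

lemma mem_Icc_of_mem {v : Fin N → ℝ} (hv : v ∈ simplexD A) (i : Fin N) : v i ∈ Icc (0 : ℝ) 1 :=
  ⟨hv.1 i, hv.2.1 ▸ Finset.single_le_sum (fun j _ => hv.1 j) (Finset.mem_univ i)⟩

lemma isClosed_simplexD : IsClosed (simplexD A) := by
  have : simplexD A = (⋂ i, {v | 0 ≤ v i}) ∩ ({v | ∑ i, v i = 1} ∩
      ⋂ i, ⋂ _ : A i i = 0, {v | v i ≤ 3 / 4}) := by
    ext v; simp [simplexD]
  rw [this]
  refine (isClosed_iInter fun i => isClosed_le continuous_const (continuous_apply i)).inter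
    ((isClosed_eq (by fun_prop) continuous_const).inter (isClosed_iInter fun i =>
      isClosed_iInter fun _ => isClosed_le (continuous_apply i) continuous_const))

lemma isCompact_simplexD : IsCompact (simplexD A) :=
  (isCompact_univ_pi fun _ : Fin N => isCompact_Icc (a := (0 : ℝ)) (b := 1)).of_isClosed_subset
    isClosed_simplexD fun _ hv i _ => mem_Icc_of_mem hv i

lemma convex_simplexD : Convex ℝ (simplexD A) := by
  intro v hv w hw a b ha hb hab
  refine ⟨fun i => ?_, ?_, fun i hi => ?_⟩
  · have := hv.1 i
    have := hw.1 i
    simp only [Pi.add_apply, Pi.smul_apply, smul_eq_mul]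
    positivity
  · simp only [Pi.add_apply, Pi.smul_apply, smul_eq_mul, Finset.sum_add_distrib,
      ← Finset.mul_sum, hv.2.1, hw.2.1, mul_one, hab]
  · simp only [Pi.add_apply, Pi.smul_apply, smul_eq_mul]
    have h1 := mul_le_mul_of_nonneg_left (hv.2.2 i hi) ha
    have h2 := mul_le_mul_of_nonneg_left (hw.2.2 i hi) hb
    nlinarith

/-- `(A v^α)_i`. -/
noncomputable def rowW (A : Matrix (Fin N) (Fin N) ℝ) (α : ℝ) (v : Fin N → ℝ) (i : Fin N) : ℝ :=
  ∑ j, A i j * v j ^ α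

/-- `u_i(v) = v_i^{α-1} (A v^α)_i`, so that `∇H(v) = 2α u(v)`. -/
noncomputable def uFun (A : Matrix (Fin N) (Fin N) ℝ) (α : ℝ) (v : Fin N → ℝ) (i : Fin N) : ℝ :=
  v i ^ (α - 1) * rowW A α v i

/-- The transition kernel `K_v(i, j) = A_{ij} v_j^α / (A v^α)_i`. -/
noncomputable def kern (A : Matrix (Fin N) (Fin N) ℝ) (α : ℝ) (v : Fin N → ℝ) :
    Matrix (Fin N) (Fin N) ℝ :=
  fun i j => A i j * v j ^ α / rowW A α v i

/-- The fundamental matrix `1 - K_v + 1 ⊗ π(v)`, where every row of `1 ⊗ π(v)` is `π(v)`. -/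
noncomputable def fundM (A : Matrix (Fin N) (Fin N) ℝ) (α : ℝ) (v : Fin N → ℝ) :
    Matrix (Fin N) (Fin N) ℝ :=
  fun i j => (1 : Matrix (Fin N) (Fin N) ℝ) i j - kern A α v i j + piFun A α v j

/-- The solution `(1 - K_v + 1 ⊗ π(v))⁻¹ ∇H(v)` of the Poisson equation with right-hand side
`∇H(v) - π(v)(∇H(v))`. -/
noncomputable def poisson (A : Matrix (Fin N) (Fin N) ℝ) (α : ℝ) (v : Fin N → ℝ)
    (i : Fin N) : ℝ :=
  ∑ j, (fundM A α v)⁻¹ i j * (2 * α * uFun A α v j)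

/-- The drift `⟨∇H(v), F(v)⟩` of `H` along the vector field `F`. -/
noncomputable def drift (A : Matrix (Fin N) (Fin N) ℝ) (α : ℝ) (v : Fin N → ℝ) : ℝ :=
  ∑ i, 2 * α * uFun A α v i * (piFun A α v i - v i)

lemma rpow_eq_mul {α x : ℝ} (hα : 1 < α) (hx : 0 ≤ x) : x ^ α = x * x ^ (α - 1) := by
  rw [← Real.rpow_one_add' hx (by linarith)]
  congr 1
  ring

lemma exists_pos_of_mem {v : Fin N → ℝ} (hv : v ∈ simplexD A) : ∃ i, 0 < v i := by
  by_contra! h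
  have : ∑ i, v i ≤ 0 := Finset.sum_nonpos fun i _ => h i
  linarith [hv.2.1]

/-- The bound `v_i ≤ 3/4` at vertices without a loop is what makes every row positive. -/
lemma rowW_pos (hnonneg : ∀ i j, 0 ≤ A i j)
    (hoffdiag : ∀ i j, i ≠ j → 0 < A i j) {v : Fin N → ℝ} (hv : v ∈ simplexD A) (i : Fin N) :
    0 < rowW A α v i := by
  have key : ∃ j, 0 < A i j ∧ 0 < v j := by
    by_cases hi : A i i = 0
    · by_contra! h
      have h1 : ∑ j, v j = v i := Finset.sum_eq_single i
        (fun j _ hj => le_antisymm (h j (hoffdiag i j hj.symm)) (hv.1 j)) (by simp)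
      linarith [hv.2.1, hv.2.2 i hi]
    · obtain ⟨j, hj⟩ := exists_pos_of_mem hv
      refine ⟨j, ?_, hj⟩
      by_cases hij : i = j
      · subst hij; exact lt_of_le_of_ne (hnonneg i i) (Ne.symm hi)
      · exact hoffdiag i j hij
  obtain ⟨j, hA, hj⟩ := key
  exact Finset.sum_pos' (fun k _ => mul_nonneg (hnonneg i k) (Real.rpow_nonneg (hv.1 k) _))
    ⟨j, Finset.mem_univ j, mul_pos hA (Real.rpow_pos_of_pos hj _)⟩

lemma Hfun_eq (A : Matrix (Fin N) (Fin N) ℝ) (α : ℝ) (v : Fin N → ℝ) :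
    Hfun A α v = ∑ i, v i ^ α * rowW A α v i := by
  simp only [Hfun, rowW, Finset.mul_sum]
  exact Finset.sum_congr rfl fun i _ => Finset.sum_congr rfl fun j _ => by ring

lemma piFun_eq (A : Matrix (Fin N) (Fin N) ℝ) (α : ℝ) (v : Fin N → ℝ) (i : Fin N) :
    piFun A α v i = v i ^ α * rowW A α v i / Hfun A α v := rfl

lemma Hfun_pos (hnonneg : ∀ i j, 0 ≤ A i j)
    (hoffdiag : ∀ i j, i ≠ j → 0 < A i j) {v : Fin N → ℝ} (hv : v ∈ simplexD A) :
    0 < Hfun A α v := by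
  rw [Hfun_eq]
  obtain ⟨i, hi⟩ := exists_pos_of_mem hv
  exact Finset.sum_pos' (fun k _ => mul_nonneg (Real.rpow_nonneg (hv.1 k) _)
      (rowW_pos hnonneg hoffdiag hv k).le)
    ⟨i, Finset.mem_univ i, mul_pos (Real.rpow_pos_of_pos hi _) (rowW_pos hnonneg hoffdiag hv i)⟩

lemma sum_piFun (hnonneg : ∀ i j, 0 ≤ A i j)
    (hoffdiag : ∀ i j, i ≠ j → 0 < A i j) {v : Fin N → ℝ} (hv : v ∈ simplexD A) :
    ∑ i, piFun A α v i = 1 := by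
  simp only [piFun_eq, ← Finset.sum_div, ← Hfun_eq]
  exact div_self (Hfun_pos hnonneg hoffdiag hv).ne'

lemma sum_kern (hnonneg : ∀ i j, 0 ≤ A i j)
    (hoffdiag : ∀ i j, i ≠ j → 0 < A i j) {v : Fin N → ℝ} (hv : v ∈ simplexD A) (i : Fin N) :
    ∑ j, kern A α v i j = 1 := by
  simp only [kern, ← Finset.sum_div]
  exact div_self (rowW_pos hnonneg hoffdiag hv i).ne'

/-- Detailed balance: for symmetric `A` the right-hand side is symmetric in `i` and `j`. -/
lemma piFun_mul_kern (hnonneg : ∀ i j, 0 ≤ A i j)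
    (hoffdiag : ∀ i j, i ≠ j → 0 < A i j) {v : Fin N → ℝ} (hv : v ∈ simplexD A) (i j : Fin N) :
    piFun A α v i * kern A α v i j = A i j * v i ^ α * v j ^ α / Hfun A α v := by
  have h1 := (rowW_pos (α := α) hnonneg hoffdiag hv i).ne'
  have h2 := (Hfun_pos (α := α) hnonneg hoffdiag hv).ne'
  rw [piFun_eq, kern]
  field_simp

/-- `π(v)` is invariant under `K_v`. -/
lemma sum_piFun_mul_kern (hsymm : ∀ i j, A i j = A j i) (hnonneg : ∀ i j, 0 ≤ A i j)
    (hoffdiag : ∀ i j, i ≠ j → 0 < A i j) {v : Fin N → ℝ} (hv : v ∈ simplexD A)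
    (x : Fin N → ℝ) :
    ∑ i, piFun A α v i * ∑ j, kern A α v i j * x j = ∑ j, piFun A α v j * x j := by
  simp only [Finset.mul_sum]
  rw [Finset.sum_comm]
  refine Finset.sum_congr rfl fun j _ => ?_
  have : ∀ i, piFun A α v i * (kern A α v i j * x j)
      = piFun A α v j * x j * kern A α v j i := fun i => by
    have h1 := piFun_mul_kern (α := α) hnonneg hoffdiag hv i j
    have h2 := piFun_mul_kern (α := α) hnonneg hoffdiag hv j i
    rw [← mul_assoc, h1, mul_right_comm (piFun A α v j), h2, hsymm i j]
    ring
  simp only [this, ← Finset.mul_sum, sum_kern hnonneg hoffdiag hv, mul_one]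

lemma fundM_mulVec (A : Matrix (Fin N) (Fin N) ℝ) (α : ℝ) (v x : Fin N → ℝ) (i : Fin N) :
    ∑ j, fundM A α v i j * x j
      = x i - ∑ j, kern A α v i j * x j + ∑ j, piFun A α v j * x j := by
  simp only [fundM, add_mul, sub_mul, Finset.sum_add_distrib, Finset.sum_sub_distrib]
  simp [Matrix.one_apply]

lemma sum_piFun_of_fundM (hsymm : ∀ i j, A i j = A j i) (hnonneg : ∀ i j, 0 ≤ A i j)
    (hoffdiag : ∀ i j, i ≠ j → 0 < A i j) {v : Fin N → ℝ} (hv : v ∈ simplexD A)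
    {x f : Fin N → ℝ} (h : ∀ i, ∑ j, fundM A α v i j * x j = f i) :
    ∑ j, piFun A α v j * x j = ∑ j, piFun A α v j * f j := by
  simp only [fundM_mulVec] at h
  simp only [← h, mul_add, mul_sub, Finset.sum_add_distrib, Finset.sum_sub_distrib,
    sum_piFun_mul_kern hsymm hnonneg hoffdiag hv]
  rw [← Finset.sum_mul, sum_piFun hnonneg hoffdiag hv]
  ring

/-- A vector in the kernel is harmonic for `K_v` and has `π(v)`-mean zero. By the maximum principle
on the support of `v` it is constant, hence zero. -/
lemma det_fundM_ne_zero (hα : 1 < α) (hsymm : ∀ i j, A i j = A j i) (hnonneg : ∀ i j, 0 ≤ A i j)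
    (hoffdiag : ∀ i j, i ≠ j → 0 < A i j) {v : Fin N → ℝ} (hv : v ∈ simplexD A) :
    (fundM A α v).det ≠ 0 := by
  intro hdet
  obtain ⟨x, hx0, hx⟩ := Matrix.exists_mulVec_eq_zero_iff.2 hdet
  have hx' : ∀ i, ∑ j, fundM A α v i j * x j = (0 : Fin N → ℝ) i := fun i => congrFun hx i
  have hπ := sum_piFun_of_fundM hsymm hnonneg hoffdiag hv hx'
  simp only [Pi.zero_apply, mul_zero, Finset.sum_const_zero] at hπ
  have hharm : ∀ i, x i = ∑ j, kern A α v i j * x j := fun i => by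
    have := hx' i
    rw [fundM_mulVec, hπ] at this
    simp only [Pi.zero_apply] at this
    linarith
  have hk0 : ∀ i j, 0 ≤ kern A α v i j := fun i j =>
    div_nonneg (mul_nonneg (hnonneg i j) (Real.rpow_nonneg (hv.1 j) _))
      (rowW_pos hnonneg hoffdiag hv i).le
  -- `i₀` maximises `x` over the support of `v`
  obtain ⟨i₁, hi₁⟩ := exists_pos_of_mem hv
  obtain ⟨i₀, hi₀, hmax⟩ := (Finset.univ.filter fun i => 0 < v i).exists_max_image x
    ⟨i₁, by simpa using hi₁⟩
  simp only [Finset.mem_filter, Finset.mem_univ, true_and] at hi₀ hmax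
  have hterm : ∀ j, 0 ≤ kern A α v i₀ j * (x i₀ - x j) := fun j => by
    by_cases hj : 0 < v j
    · exact mul_nonneg (hk0 i₀ j) (sub_nonneg.2 (hmax j hj))
    · have : v j = 0 := le_antisymm (not_lt.1 hj) (hv.1 j)
      simp [kern, this, Real.zero_rpow (by linarith : α ≠ 0)]
  have hsum0 : ∑ j, kern A α v i₀ j * (x i₀ - x j) = 0 := by
    simp only [mul_sub, Finset.sum_sub_distrib, ← Finset.sum_mul, sum_kern hnonneg hoffdiag hv,
      ← hharm i₀]
    ring
  have hconst : ∀ j, 0 < v j → x j = x i₀ := fun j hj => by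
    by_cases hij : i₀ = j
    · rw [hij]
    · have h1 := (Finset.sum_eq_zero_iff_of_nonneg fun j _ => hterm j).1 hsum0 j
        (Finset.mem_univ j)
      have h2 : 0 < kern A α v i₀ j := div_pos
        (mul_pos (hoffdiag i₀ j hij) (Real.rpow_pos_of_pos hj _)) (rowW_pos hnonneg hoffdiag hv i₀)
      rcases mul_eq_zero.1 h1 with h | h
      · exact absurd h h2.ne'
      · linarith
  have hall : ∀ i, x i = x i₀ := fun i => by
    have : ∀ j, kern A α v i j * x j = kern A α v i j * x i₀ := fun j => by
      by_cases hj : 0 < v j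
      · rw [hconst j hj]
      · have : v j = 0 := le_antisymm (not_lt.1 hj) (hv.1 j)
        simp [kern, this, Real.zero_rpow (by linarith : α ≠ 0)]
    rw [hharm i]
    simp only [this, ← Finset.sum_mul, sum_kern hnonneg hoffdiag hv, one_mul]
  simp only [hall, ← Finset.sum_mul, sum_piFun hnonneg hoffdiag hv, one_mul] at hπ
  exact hx0 (funext fun i => by rw [hall i, hπ, Pi.zero_apply])

lemma poisson_eq (hα : 1 < α) (hsymm : ∀ i j, A i j = A j i) (hnonneg : ∀ i j, 0 ≤ A i j)
    (hoffdiag : ∀ i j, i ≠ j → 0 < A i j) {v : Fin N → ℝ} (hv : v ∈ simplexD A) (i : Fin N) :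
    poisson A α v i - ∑ j, kern A α v i j * poisson A α v j
      = 2 * α * uFun A α v i - ∑ j, piFun A α v j * (2 * α * uFun A α v j) := by
  have hunit : IsUnit (fundM A α v).det :=
    (det_fundM_ne_zero hα hsymm hnonneg hoffdiag hv).isUnit
  have hsolve : ∀ i, ∑ j, fundM A α v i j * poisson A α v j = 2 * α * uFun A α v i := fun i => by
    have h : fundM A α v *ᵥ ((fundM A α v)⁻¹ *ᵥ fun j => 2 * α * uFun A α v j)
        = fun j => 2 * α * uFun A α v j := by
      rw [Matrix.mulVec_mulVec, Matrix.mul_nonsing_inv _ hunit, Matrix.one_mulVec]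
    exact congrFun h i
  have h1 := sum_piFun_of_fundM hsymm hnonneg hoffdiag hv hsolve
  have h2 := hsolve i
  rw [fundM_mulVec, h1] at h2
  linarith

lemma Hfun_eq_sum_uFun (hα : 1 < α) {v : Fin N → ℝ} (hv : v ∈ simplexD A) :
    Hfun A α v = ∑ i, v i * uFun A α v i := by
  rw [Hfun_eq]
  exact Finset.sum_congr rfl fun i _ => by rw [rpow_eq_mul hα (hv.1 i), uFun, mul_assoc]

lemma piFun_eq_uFun (hα : 1 < α) {v : Fin N → ℝ} (hv : v ∈ simplexD A) (i : Fin N) :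
    piFun A α v i = v i * uFun A α v i / Hfun A α v := by
  rw [piFun_eq, rpow_eq_mul hα (hv.1 i), uFun, mul_assoc]

/-- The drift of `H` is, up to a positive factor, the variance of `u(v)` under `v`. -/
lemma drift_eq (hα : 1 < α) (hnonneg : ∀ i j, 0 ≤ A i j)
    (hoffdiag : ∀ i j, i ≠ j → 0 < A i j) {v : Fin N → ℝ} (hv : v ∈ simplexD A) :
    drift A α v = 2 * α / Hfun A α v * ∑ i, v i * (uFun A α v i - Hfun A α v) ^ 2 := by
  have hH := (Hfun_pos (α := α) hnonneg hoffdiag hv).ne'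
  have hHu := Hfun_eq_sum_uFun hα hv
  have h1 : ∑ i, v i * (uFun A α v i - Hfun A α v) ^ 2
      = ∑ i, v i * uFun A α v i ^ 2 - Hfun A α v ^ 2 := by
    have : ∀ i, v i * (uFun A α v i - Hfun A α v) ^ 2 = v i * uFun A α v i ^ 2
        - 2 * Hfun A α v * (v i * uFun A α v i) + Hfun A α v ^ 2 * v i := fun i => by ring
    simp only [this, Finset.sum_add_distrib, Finset.sum_sub_distrib, ← Finset.mul_sum, ← hHu,
      hv.2.1]
    ring
  have h2 : ∀ i, 2 * α * uFun A α v i * (piFun A α v i - v i)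
      = 2 * α / Hfun A α v * (v i * uFun A α v i ^ 2) - 2 * α * (v i * uFun A α v i) := fun i => by
    rw [piFun_eq_uFun hα hv]
    field_simp
  rw [h1, drift]
  simp only [h2, Finset.sum_sub_distrib, ← Finset.mul_sum, ← hHu]
  field_simp

lemma drift_nonneg (hα : 1 < α) (hnonneg : ∀ i j, 0 ≤ A i j)
    (hoffdiag : ∀ i j, i ≠ j → 0 < A i j) {v : Fin N → ℝ} (hv : v ∈ simplexD A) :
    0 ≤ drift A α v := by
  rw [drift_eq hα hnonneg hoffdiag hv]
  have := Hfun_pos (α := α) hnonneg hoffdiag hv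
  exact mul_nonneg (by positivity)
    (Finset.sum_nonneg fun i _ => mul_nonneg (hv.1 i) (sq_nonneg _))

lemma Ffield_eq_zero_of_drift (hα : 1 < α) (hnonneg : ∀ i j, 0 ≤ A i j)
    (hoffdiag : ∀ i j, i ≠ j → 0 < A i j) {v : Fin N → ℝ} (hv : v ∈ simplexD A)
    (h : drift A α v = 0) : Ffield A α v = 0 := by
  have hH := Hfun_pos (α := α) hnonneg hoffdiag hv
  rw [drift_eq hα hnonneg hoffdiag hv] at h
  have hs := (mul_eq_zero.1 h).resolve_left (by positivity)
  rw [Finset.sum_eq_zero_iff_of_nonneg fun i _ => mul_nonneg (hv.1 i) (sq_nonneg _)] at hs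
  funext i
  have hi := hs i (Finset.mem_univ i)
  simp only [Ffield, Pi.zero_apply, piFun_eq_uFun hα hv]
  rcases mul_eq_zero.1 hi with h0 | h0
  · simp [h0]
  · have h0 : uFun A α v i = Hfun A α v := by
      have := pow_eq_zero_iff (two_ne_zero) |>.1 h0
      linarith
    rw [h0]
    field_simp
    ring

lemma exists_holder_exponent (hα : 1 < α) :
    ∃ β : ℝ, 0 < β ∧ β ≤ 1 ∧ ∀ (A : Matrix (Fin N) (Fin N) ℝ) (i : Fin N),
      HolderBdd (simplexD A) β (fun v => v i) ∧
      HolderBdd (simplexD A) β (fun v => v i ^ (α - 1)) ∧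
      HolderBdd (simplexD A) β (fun v => v i ^ α) := by
  -- write `x ^ (α - 1) = (x ^ β) ^ m` with an integer `m ≥ α - 1`, so that `β ≤ 1`
  set m := ⌈α - 1⌉₊ with hm
  have hm1 : α - 1 ≤ m := Nat.le_ceil _
  have hm0 : (0 : ℝ) < m := by linarith
  have hβ0 : 0 < (α - 1) / m := div_pos (by linarith) hm0
  have hβ1 : (α - 1) / m ≤ 1 := (div_le_one hm0).2 hm1
  refine ⟨(α - 1) / m, hβ0, hβ1, fun A i => ?_⟩
  set β := (α - 1) / m with hβ
  have hcoord : HolderBdd (simplexD A) β (fun v => v i) := by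
    refine ⟨⟨1, zero_le_one, fun v hv => ?_⟩, 1, zero_le_one, fun v hv w hw => ?_⟩
    · rw [abs_of_nonneg (hv.1 i)]
      exact (mem_Icc_of_mem hv i).2
    · have h1 := mem_Icc_of_mem hv i
      have h2 := mem_Icc_of_mem hw i
      have h3 : |v i - w i| ≤ 1 := abs_le.2 ⟨by linarith [h1.1, h2.2], by linarith [h1.2, h2.1]⟩
      rw [one_mul]
      calc |v i - w i| ≤ |v i - w i| ^ β := by
            simpa using Real.rpow_le_rpow_of_exponent_ge' (abs_nonneg _) h3 hβ0.le hβ1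
        _ ≤ dist v w ^ β := Real.rpow_le_rpow (abs_nonneg _) (dist_le_pi_dist v w i) hβ0.le
  have hβp : HolderBdd (simplexD A) β (fun v => v i ^ β) := by
    refine ⟨⟨1, zero_le_one, fun v hv => ?_⟩, 1, zero_le_one, fun v hv w hw => ?_⟩
    · rw [abs_of_nonneg (Real.rpow_nonneg (hv.1 i) _)]
      exact Real.rpow_le_one (hv.1 i) (mem_Icc_of_mem hv i).2 hβ0.le
    · rw [one_mul]
      exact (abs_rpow_sub_rpow_le hβ0.le hβ1 (hv.1 i) (hw.1 i)).trans
        (Real.rpow_le_rpow (abs_nonneg _) (dist_le_pi_dist v w i) hβ0.le)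
  have hpow : HolderBdd (simplexD A) β (fun v => v i ^ (α - 1)) :=
    (hβp.pow m).congr fun v hv => by
      rw [← Real.rpow_natCast, ← Real.rpow_mul (hv.1 i), hβ, div_mul_cancel₀ _ hm0.ne']
  exact ⟨hcoord, hpow, (hcoord.mul hpow).congr fun v hv => rpow_eq_mul hα (hv.1 i)⟩

lemma holder_model (hα : 1 < α) (hsymm : ∀ i j, A i j = A j i) (hnonneg : ∀ i j, 0 ≤ A i j)
    (hoffdiag : ∀ i j, i ≠ j → 0 < A i j) :
    ∃ β : ℝ, 0 < β ∧
      (∀ i, HolderBdd (simplexD A) β fun v => 2 * α * uFun A α v i) ∧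
      HolderBdd (simplexD A) β (Hfun A α) ∧
      HolderBdd (simplexD A) β (drift A α) ∧
      (∀ i, HolderBdd (simplexD A) β fun v => poisson A α v i) ∧
      (∀ i, HolderBdd (simplexD A) β fun v => ∑ j, kern A α v i j * poisson A α v j) := by
  obtain ⟨β, hβ0, -, h⟩ := exists_holder_exponent (N := N) hα
  have hrow : ∀ i, HolderBdd (simplexD A) β fun v => rowW A α v i := fun i =>
    HolderBdd.sum _ fun j => (HolderBdd.const _).mul (h A j).2.2
  have hu : ∀ i, HolderBdd (simplexD A) β fun v => 2 * α * uFun A α v i := fun i =>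
    (HolderBdd.const _).mul ((h A i).2.1.mul (hrow i))
  have hH : HolderBdd (simplexD A) β (Hfun A α) :=
    HolderBdd.sum _ fun i => HolderBdd.sum _ fun j =>
      ((HolderBdd.const _).mul (h A i).2.2).mul (h A j).2.2
  have hHinv := hH.inv hβ0 isCompact_simplexD fun v hv => (Hfun_pos hnonneg hoffdiag hv).ne'
  have hπ : ∀ i, HolderBdd (simplexD A) β fun v => piFun A α v i := fun i =>
    (((h A i).2.2.mul (hrow i)).mul hHinv).congr fun v _ => by rw [piFun_eq, div_eq_mul_inv]
  have hk : ∀ i j, HolderBdd (simplexD A) β fun v => kern A α v i j := fun i j =>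
    (((HolderBdd.const (A i j)).mul (h A j).2.2).mul ((hrow i).inv hβ0 isCompact_simplexD
      fun v hv => (rowW_pos hnonneg hoffdiag hv i).ne')).congr fun v _ => by
        rw [kern, div_eq_mul_inv]
  have hM : ∀ i j, HolderBdd (simplexD A) β fun v => fundM A α v i j := fun i j =>
    ((HolderBdd.const _).sub (hk i j)).add (hπ j)
  have hg : ∀ i, HolderBdd (simplexD A) β fun v => poisson A α v i := fun i =>
    HolderBdd.sum _ fun j => (HolderBdd.matrix_inv hβ0 isCompact_simplexD hM
      (fun v hv => det_fundM_ne_zero hα hsymm hnonneg hoffdiag hv) i j).mul (hu j)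
  exact ⟨β, hβ0, hu, hH, HolderBdd.sum _ fun i => (hu i).mul ((hπ i).sub (h A i).1), hg,
    fun i => HolderBdd.sum _ fun j => (hk i j).mul (hg j)⟩

lemma hasDerivAt_Hfun_segment (hα : 1 < α) (hsymm : ∀ i j, A i j = A j i) (w d : Fin N → ℝ)
    (t : ℝ) :
    HasDerivAt (fun t : ℝ => Hfun A α (w + t • d))
      (∑ i, 2 * α * uFun A α (w + t • d) i * d i) t := by
  have hc : ∀ i, HasDerivAt (fun t : ℝ => (w + t • d) i ^ α)
      (α * (w + t • d) i ^ (α - 1) * d i) t := fun i => by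
    have h1 : HasDerivAt (fun t : ℝ => (w + t • d) i) (d i) t := by
      simpa using ((hasDerivAt_id t).mul_const (d i)).const_add (w i)
    have := h1.rpow_const (p := α) (Or.inr hα.le)
    convert this using 1
    ring
  have h2 : HasDerivAt (fun t : ℝ => Hfun A α (w + t • d))
      (∑ i, ∑ j, (A i j * (α * (w + t • d) i ^ (α - 1) * d i) * (w + t • d) j ^ α
        + A i j * (w + t • d) i ^ α * (α * (w + t • d) j ^ (α - 1) * d j))) t := by
    unfold Hfun
    exact HasDerivAt.fun_sum fun i _ => HasDerivAt.fun_sum fun j _ =>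
      ((hc i).const_mul (A i j)).mul (hc j)
  convert h2 using 1
  simp only [Finset.sum_add_distrib]
  -- by symmetry of `A` both halves of the product rule contribute the same
  rw [Finset.sum_comm (f := fun i j => A i j * (w + t • d) i ^ α
    * (α * (w + t • d) j ^ (α - 1) * d j)), ← Finset.sum_add_distrib]
  refine Finset.sum_congr rfl fun i _ => ?_
  rw [← Finset.sum_add_distrib]
  simp only [uFun, rowW, Finset.mul_sum, Finset.sum_mul]
  refine Finset.sum_congr rfl fun j _ => ?_
  rw [hsymm j i]
  ring

/-- First-order Taylor expansion of `H` on `Δ` with remainder `O(‖w' - w‖^{1+β})`. -/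
lemma Hfun_taylor (hα : 1 < α) (hsymm : ∀ i j, A i j = A j i) {β : ℝ} (hβ : 0 < β)
    (hu : ∀ i, HolderBdd (simplexD A) β fun v => 2 * α * uFun A α v i) :
    ∃ C, 0 ≤ C ∧ ∀ w ∈ simplexD A, ∀ w' ∈ simplexD A,
      |Hfun A α w' - Hfun A α w - ∑ i, 2 * α * uFun A α w i * (w' i - w i)|
        ≤ C * (dist w' w ^ β * dist w' w) := by
  choose C hC0 hC using fun i => (hu i).holder
  refine ⟨∑ i, C i, Finset.sum_nonneg fun i _ => hC0 i, fun w hw w' hw' => ?_⟩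
  obtain ⟨t, ht, hslope⟩ := exists_hasDerivAt_eq_slope
    (fun t : ℝ => Hfun A α (w + t • (w' - w))) _ (zero_lt_one (α := ℝ))
    (fun t _ => (hasDerivAt_Hfun_segment hα hsymm w (w' - w) t).continuousAt.continuousWithinAt)
    (fun t _ => hasDerivAt_Hfun_segment hα hsymm w (w' - w) t)
  simp only [one_smul, add_sub_cancel, zero_smul, add_zero, sub_zero, div_one] at hslope
  rw [← hslope, ← Finset.sum_sub_distrib, Finset.sum_mul]
  refine (Finset.abs_sum_le_sum_abs _ _).trans (Finset.sum_le_sum fun i _ => ?_)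
  have hmem : w + t • (w' - w) ∈ simplexD A :=
    convex_simplexD.add_smul_sub_mem hw hw' ⟨ht.1.le, ht.2.le⟩
  rw [Pi.sub_apply, ← sub_mul, abs_mul, ← mul_assoc]
  have hd : dist (w + t • (w' - w)) w ≤ dist w' w := by
    rw [dist_eq_norm, dist_eq_norm, add_sub_cancel_left, norm_smul, Real.norm_eq_abs,
      abs_of_pos ht.1]
    exact mul_le_of_le_one_left (norm_nonneg _) ht.2.le
  refine mul_le_mul ((hC i _ hmem _ hw).trans ?_) ?_ (abs_nonneg _)
    (mul_nonneg (hC0 i) (Real.rpow_nonneg dist_nonneg _))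
  · exact mul_le_mul_of_nonneg_left (Real.rpow_le_rpow dist_nonneg hd hβ.le) (hC0 i)
  · exact dist_le_pi_dist w' w i

end Model

/-! ### Summability of the drift along a path -/

section Path

variable {N : ℕ} {A : Matrix (Fin N) (Fin N) ℝ} {α : ℝ}

/-- The step size `γ_n = 1 / (n + 2 + N)` of the recursion for the regularised occupation
measures. -/
noncomputable def stepSize (N n : ℕ) : ℝ := 1 / ((n : ℝ) + (2 + N))

lemma stepSize_pos (N n : ℕ) : 0 < stepSize N n := by
  unfold stepSize; positivity

lemma summable_stepSize_rpow_iff (N : ℕ) (s : ℝ) :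
    (Summable fun n => stepSize N n ^ s) ↔ 1 < s := by
  rw [← Real.summable_one_div_nat_add_rpow (2 + N) s]
  refine summable_congr fun n => ?_
  have h : (0 : ℝ) < (n : ℝ) + (2 + N) := by positivity
  rw [stepSize, abs_of_pos h, Real.div_rpow zero_le_one h.le, Real.one_rpow]

lemma not_summable_stepSize (N : ℕ) : ¬ Summable (stepSize N) := by
  have := (summable_stepSize_rpow_iff N 1).not.2 (lt_irrefl 1)
  simpa using this

lemma summable_stepSize_sq (N : ℕ) : Summable fun n => stepSize N n ^ 2 := by
  have := (summable_stepSize_rpow_iff N 2).2 (by norm_num)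
  exact_mod_cast this

lemma summable_stepSize_mul (N : ℕ) {β : ℝ} (hβ : 0 < β) :
    Summable fun n => stepSize N n ^ β * stepSize N n := by
  refine ((summable_stepSize_rpow_iff N (β + 1)).2 (by linarith)).congr fun n => ?_
  rw [Real.rpow_add (stepSize_pos N n), Real.rpow_one]

lemma stepSize_sub (N n : ℕ) :
    |stepSize N n - stepSize N (n + 1)| ≤ stepSize N n ^ 2 := by
  have h : (0 : ℝ) < (n : ℝ) + (2 + N) := by positivity
  have h' : (0 : ℝ) < (n : ℝ) + 1 + (2 + N) := by positivity
  have e : stepSize N n - stepSize N (n + 1) = stepSize N n * stepSize N (n + 1) := by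
    unfold stepSize
    push_cast
    field_simp
    ring
  have hle : stepSize N (n + 1) ≤ stepSize N n := by
    unfold stepSize
    push_cast
    exact one_div_le_one_div_of_le h (by linarith)
  rw [e, abs_of_pos (mul_pos (stepSize_pos N n) (stepSize_pos N (n + 1))), sq]
  exact mul_le_mul_of_nonneg_left hle (stepSize_pos N n).le

lemma dist_step_le {w w' : Fin N → ℝ} (hw : w ∈ simplexD A) {x : Fin N} {n : ℕ}
    (hrec : ∀ i, w' i - w i = stepSize N n * ((if x = i then 1 else 0) - w i)) :
    dist w' w ≤ stepSize N n := by
  refine (dist_pi_le_iff (stepSize_pos N n).le).2 fun i => ?_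
  rw [Real.dist_eq, hrec i, abs_mul, abs_of_pos (stepSize_pos N n)]
  refine mul_le_of_le_one_right (stepSize_pos N n).le ?_
  have := mem_Icc_of_mem hw i
  split_ifs <;> rw [abs_le] <;> constructor <;> linarith [this.1, this.2]

/-- Pathwise Lyapunov argument: when the martingale part of the noise stays bounded, the total drift
of `H` along the path is finite. -/
lemma summable_drift (hα : 1 < α) (hsymm : ∀ i j, A i j = A j i) (hnonneg : ∀ i j, 0 ≤ A i j)
    (hoffdiag : ∀ i j, i ≠ j → 0 < A i j) {w : ℕ → Fin N → ℝ} {x : ℕ → Fin N}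
    (hw : ∀ n, w n ∈ simplexD A)
    (hrec : ∀ n i, w (n + 1) i - w n i
      = stepSize N n * ((if x (n + 1) = i then 1 else 0) - w n i))
    (hmart : ∃ C, ∀ m, |∑ n ∈ Finset.range m, ∑ j, stepSize N n * poisson A α (w n) j
      * ((if x (n + 1) = j then 1 else 0) - kern A α (w n) (x n) j)| ≤ C) :
    Summable fun n => stepSize N n * drift A α (w n) := by
  obtain ⟨β, hβ, hu, hH, -, -, hr⟩ := holder_model hα hsymm hnonneg hoffdiag
  obtain ⟨CT, hCT0, hCT⟩ := Hfun_taylor hα hsymm hβ hu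
  obtain ⟨BH, -, hBH⟩ := hH.bdd
  choose Br hBr0 hBr using fun i => (hr i).bdd
  choose Cr hCr0 hCr using fun i => (hr i).holder
  obtain ⟨CM, hCM⟩ := hmart
  set r : (Fin N → ℝ) → Fin N → ℝ := fun v i => ∑ j, kern A α v i j * poisson A α v j with hrdef
  set γ := stepSize N
  have hγ : ∀ n, 0 < γ n := stepSize_pos N
  have hγ1 : ∀ n, γ n ≤ 1 := fun n => by
    simp only [γ, stepSize]
    rw [div_le_one (by positivity)]
    have : (0 : ℝ) ≤ n := by positivity
    have : (0 : ℝ) ≤ N := by positivity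
    linarith
  set B := ∑ i, Br i
  have hB : ∀ v ∈ simplexD A, ∀ i, |r v i| ≤ B := fun v hv i => (hBr i v hv).trans
    (Finset.single_le_sum (fun j _ => hBr0 j) (Finset.mem_univ i))
  have hB0 : 0 ≤ B := Finset.sum_nonneg fun i _ => hBr0 i
  set C := ∑ i, Cr i
  have hC0 : 0 ≤ C := Finset.sum_nonneg fun i _ => hCr0 i
  have hC : ∀ v ∈ simplexD A, ∀ v' ∈ simplexD A, ∀ i, |r v i - r v' i| ≤ C * dist v v' ^ β :=
    fun v hv v' hv' i => (hCr i v hv v' hv').trans (mul_le_mul_of_nonneg_right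
      (Finset.single_le_sum (fun j _ => hCr0 j) (Finset.mem_univ i))
      (Real.rpow_nonneg dist_nonneg _))
  have hdist : ∀ n, dist (w (n + 1)) (w n) ≤ γ n := fun n => dist_step_le (hw n) (hrec n)
  have hdistβ : ∀ n, dist (w (n + 1)) (w n) ^ β ≤ γ n ^ β := fun n =>
    Real.rpow_le_rpow dist_nonneg (hdist n) hβ.le
  set M : ℕ → ℝ := fun n => ∑ j, γ n * poisson A α (w n) j
      * ((if x (n + 1) = j then 1 else 0) - kern A α (w n) (x n) j) with hM
  -- `H` corrected by the term that makes the Poisson part of the noise telescope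
  set U : ℕ → ℝ := fun n => Hfun A α (w n) + γ n * r (w n) (x n) with hU
  set q : ℕ → ℝ := fun n => (CT + C) * (γ n ^ β * γ n) + B * γ n ^ 2 with hq
  have hqs : Summable q := ((summable_stepSize_mul N hβ).mul_left _).add
    ((summable_stepSize_sq N).mul_left _)
  have hq0 : ∀ n, 0 ≤ q n := fun n => by
    have := hγ n
    have := Real.rpow_nonneg (hγ n).le β
    positivity
  have hstep : ∀ n, γ n * drift A α (w n) ≤ (U (n + 1) - U n) - M n + q n := by
    intro n
    have hMn : M n = γ n * (poisson A α (w n) (x (n + 1)) - r (w n) (x n)) := by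
      simp only [hM, hrdef, mul_assoc, ← Finset.mul_sum, mul_sub, Finset.sum_sub_distrib]
      simp [mul_comm]
    have hP := poisson_eq hα hsymm hnonneg hoffdiag (hw n) (x (n + 1))
    have hlin : ∑ i, 2 * α * uFun A α (w n) i * (w (n + 1) i - w n i)
        = γ n * (2 * α * uFun A α (w n) (x (n + 1))
          - ∑ i, 2 * α * uFun A α (w n) i * w n i) := by
      simp only [hrec n, mul_sub, Finset.sum_sub_distrib, Finset.mul_sum]
      congr 1
      · rw [Finset.sum_eq_single (x (n + 1)) (fun j _ hj => by simp [hj.symm]) (by simp)]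
        simp only [if_true]
        ring
      · exact Finset.sum_congr rfl fun i _ => by ring
    have hdr : drift A α (w n) = ∑ j, piFun A α (w n) j * (2 * α * uFun A α (w n) j)
        - ∑ i, 2 * α * uFun A α (w n) i * w n i := by
      rw [drift, ← Finset.sum_sub_distrib]
      exact Finset.sum_congr rfl fun i _ => by ring
    have hT : |Hfun A α (w (n + 1)) - Hfun A α (w n)
        - ∑ i, 2 * α * uFun A α (w n) i * (w (n + 1) i - w n i)| ≤ CT * (γ n ^ β * γ n) :=
      (hCT _ (hw n) _ (hw (n + 1))).trans (mul_le_mul_of_nonneg_left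
        (mul_le_mul (hdistβ n) (hdist n) dist_nonneg (Real.rpow_nonneg (hγ n).le _)) hCT0)
    have hR1 : |γ n * (r (w (n + 1)) (x (n + 1)) - r (w n) (x (n + 1)))|
        ≤ C * (γ n ^ β * γ n) := by
      rw [abs_mul, abs_of_pos (hγ n)]
      have := mul_le_mul_of_nonneg_left ((hC _ (hw (n + 1)) _ (hw n) (x (n + 1))).trans
        (mul_le_mul_of_nonneg_left (hdistβ n) hC0)) (hγ n).le
      linarith
    have hR2 : |(γ n - γ (n + 1)) * r (w (n + 1)) (x (n + 1))| ≤ B * γ n ^ 2 := by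
      rw [abs_mul, mul_comm B]
      exact mul_le_mul (stepSize_sub N n) (hB _ (hw _) _) (abs_nonneg _) (sq_nonneg _)
    have hPr : poisson A α (w n) (x (n + 1)) - r (w n) (x (n + 1))
      = 2 * α * uFun A α (w n) (x (n + 1))
        - ∑ j, piFun A α (w n) j * (2 * α * uFun A α (w n) j) := hP
    have hlin2 : ∑ i, 2 * α * uFun A α (w n) i * (w (n + 1) i - w n i)
        = M n + γ n * r (w n) (x n) - γ n * r (w n) (x (n + 1)) + γ n * drift A α (w n) := by
      rw [hlin, hMn, hdr]
      have : 2 * α * uFun A α (w n) (x (n + 1)) = poisson A α (w n) (x (n + 1))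
        - r (w n) (x (n + 1)) + ∑ j, piFun A α (w n) j * (2 * α * uFun A α (w n) j) := by
        rw [hPr]; ring
      rw [this]
      ring
    rw [hlin2] at hT
    have e1 := (abs_le.1 hT).1
    have e2 := (abs_le.1 hR1).1
    have e3 := (abs_le.1 hR2).2
    simp only [hU, hq]
    nlinarith
  refine summable_of_sum_range_le (c := 2 * (BH + B) + CM + ∑' n, q n)
    (fun n => mul_nonneg (hγ n).le (drift_nonneg hα hnonneg hoffdiag (hw n))) fun m => ?_
  have h1 := Finset.sum_le_sum fun n (_ : n ∈ Finset.range m) => hstep n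
  rw [Finset.sum_add_distrib, Finset.sum_sub_distrib, Finset.sum_range_sub] at h1
  have hUb : ∀ n, |U n| ≤ BH + B := fun n => (abs_add_le _ _).trans (add_le_add (hBH _ (hw n)) (by
    rw [abs_mul, abs_of_pos (hγ n)]
    exact (mul_le_of_le_one_left (abs_nonneg _) (hγ1 n)).trans (hB _ (hw n) _)))
  have h2 := (abs_le.1 (hCM m)).1
  have h3 := hqs.sum_le_tsum (Finset.range m) fun n _ => hq0 n
  have h4 := (abs_le.1 (hUb m)).2
  have h5 := (abs_le.1 (hUb 0)).1
  linarith

end Path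

/-! ### Occupation counts and measurability -/

section Occupation

variable {N : ℕ} {A : Matrix (Fin N) (Fin N) ℝ} {α : ℝ}

/-- The regularised occupation measure `w_n(i) = (1 + z_i) / (n + 1 + N)` for counts `z` at
time `n`. -/
noncomputable def regOcc (N n : ℕ) (z : Fin N → ℕ) : Fin N → ℝ :=
  fun i => (1 + (z i : ℝ)) / ((n : ℝ) + 1 + N)

/-- The kernel is homogeneous of degree `0`, so normalising the counts does not change it. -/
lemma kern_regOcc (n : ℕ) (z : Fin N → ℕ) (i j : Fin N) :
    kern A α (regOcc N n z) i j
      = A i j * (1 + (z j : ℝ)) ^ α / ∑ k, A i k * (1 + (z k : ℝ)) ^ α := by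
  have hc : (0 : ℝ) < (n : ℝ) + 1 + N := by positivity
  have h : ∀ k, regOcc N n z k ^ α = (1 + (z k : ℝ)) ^ α / ((n : ℝ) + 1 + N) ^ α := fun k =>
    Real.div_rpow (by positivity) hc.le _
  have hcα : ((n : ℝ) + 1 + N) ^ α ≠ 0 := (Real.rpow_pos_of_pos hc _).ne'
  simp only [kern, rowW, h, ← mul_div_assoc, ← Finset.sum_div]
  exact div_div_div_cancel_right₀ hcα _ _

lemma abs_transition_le_one (hnonneg : ∀ i j, 0 ≤ A i j) (z : Fin N → ℕ) (i j : Fin N) :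
    |A i j * (1 + (z j : ℝ)) ^ α / ∑ k, A i k * (1 + (z k : ℝ)) ^ α| ≤ 1 := by
  have h0 : ∀ k, 0 ≤ A i k * (1 + (z k : ℝ)) ^ α := fun k =>
    mul_nonneg (hnonneg i k) (by positivity)
  rw [abs_of_nonneg (div_nonneg (h0 j) (Finset.sum_nonneg fun k _ => h0 k))]
  exact div_le_one_of_le₀ (Finset.single_le_sum (fun k _ => h0 k) (Finset.mem_univ j))
    (Finset.sum_nonneg fun k _ => h0 k)

section Counts

variable {x : ℕ → Fin N} {z : ℕ → Fin N → ℕ}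

lemma count_zero
    (hz : ∀ n j, z n j = ((Finset.range (n + 1)).filter fun l => x l = j).card)
    (j : Fin N) : z 0 j = if x 0 = j then 1 else 0 := by
  rw [hz, Finset.card_filter, zero_add, Finset.sum_range_one]

lemma count_succ
    (hz : ∀ n j, z n j = ((Finset.range (n + 1)).filter fun l => x l = j).card)
    (n : ℕ) (j : Fin N) : z (n + 1) j = z n j + if x (n + 1) = j then 1 else 0 := by
  simp only [hz, Finset.card_filter, Finset.sum_range_succ _ (n + 1)]

lemma sum_count
    (hz : ∀ n j, z n j = ((Finset.range (n + 1)).filter fun l => x l = j).card)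
    (n : ℕ) : ∑ j, z n j = n + 1 := by
  induction n with
  | zero => simp [count_zero hz]
  | succ n ih => simp [count_succ hz, Finset.sum_add_distrib, ih]

lemma two_mul_count_le
    (hz : ∀ n j, z n j = ((Finset.range (n + 1)).filter fun l => x l = j).card)
    {i : Fin N} (hi : ∀ n, x n = i → x (n + 1) ≠ i) (n : ℕ) :
    2 * z n i ≤ n + 1 + if x n = i then 1 else 0 := by
  induction n with
  | zero => rw [count_zero hz]; split_ifs <;> simp
  | succ n ih =>
    rw [count_succ hz]
    have := hi n
    split_ifs at ih ⊢ <;> omega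

lemma regOcc_mem
    (hz : ∀ n j, z n j = ((Finset.range (n + 1)).filter fun l => x l = j).card)
    (hN : 2 ≤ N)
    (hx : ∀ n i, A i i = 0 → x n = i → x (n + 1) ≠ i) (n : ℕ) :
    regOcc N n (z n) ∈ simplexD A := by
  have hc : (0 : ℝ) < (n : ℝ) + 1 + N := by positivity
  refine ⟨fun i => by unfold regOcc; positivity, ?_, fun i hi => ?_⟩
  · have h : ∑ j, (z n j : ℝ) = n + 1 := by exact_mod_cast sum_count hz n
    simp only [regOcc, ← Finset.sum_div, Finset.sum_add_distrib, h]
    rw [div_eq_one_iff_eq hc.ne']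
    simp
    ring
  · have h1 : 2 * z n i ≤ n + 1 + 1 :=
      (two_mul_count_le hz (fun n => hx n i hi) n).trans (by split_ifs <;> simp)
    have h2 : 2 * (z n i : ℝ) ≤ n + 1 + 1 := by exact_mod_cast h1
    have h3 : (2 : ℝ) ≤ N := by exact_mod_cast hN
    have h4 : (0 : ℝ) ≤ n := by positivity
    rw [regOcc, div_le_iff₀ hc]
    linarith

lemma regOcc_rec
    (hz : ∀ n j, z n j = ((Finset.range (n + 1)).filter fun l => x l = j).card)
    (n : ℕ) (i : Fin N) :
    regOcc N (n + 1) (z (n + 1)) i - regOcc N n (z n) i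
      = stepSize N n * ((if x (n + 1) = i then 1 else 0) - regOcc N n (z n) i) := by
  have hc : (n : ℝ) + 1 + N ≠ 0 := by positivity
  have hc' : (n : ℝ) + (2 + N) ≠ 0 := by positivity
  have hc'' : (n : ℝ) + 1 + 1 + N ≠ 0 := by positivity
  simp only [regOcc, stepSize, count_succ hz]
  push_cast
  rw [show (n : ℝ) + 1 + 1 + N = n + (2 + N) by ring]
  field_simp
  ring

lemma occ_mem_Icc
    (hz : ∀ n j, z n j = ((Finset.range (n + 1)).filter fun l => x l = j).card)
    (n : ℕ) (i : Fin N) : (z n i : ℝ) / ((n : ℝ) + 1) ∈ Icc (0 : ℝ) 1 := by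
  have h : z n i ≤ n + 1 := sum_count hz n ▸
    Finset.single_le_sum (fun j _ => Nat.zero_le (z n j)) (Finset.mem_univ i)
  have h' : (z n i : ℝ) ≤ n + 1 := by exact_mod_cast h
  exact ⟨by positivity, div_le_one_of_le₀ h' (by positivity)⟩

lemma dist_occ_regOcc
    (hz : ∀ n j, z n j = ((Finset.range (n + 1)).filter fun l => x l = j).card)
    (n : ℕ) :
    dist (fun i => (z n i : ℝ) / ((n : ℝ) + 1)) (regOcc N n (z n)) ≤ (N + 1) * (1 / ((n : ℝ) + 1)) := by
  refine (dist_pi_le_iff (by positivity)).2 fun i => ?_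
  have hm := occ_mem_Icc hz n i
  set y := (z n i : ℝ) / ((n : ℝ) + 1) with hy
  have hn : (0 : ℝ) < (n : ℝ) + 1 := by positivity
  have hc : (0 : ℝ) < (n : ℝ) + 1 + N := by positivity
  have hzy : (z n i : ℝ) = y * (n + 1) := by rw [hy]; field_simp
  have e : y - regOcc N n (z n) i = (y * N - 1) / ((n : ℝ) + 1 + N) := by
    rw [regOcc, hzy]
    field_simp
    ring
  have hN0 : (0 : ℝ) ≤ N := by positivity
  rw [Real.dist_eq, e, abs_div, abs_of_pos hc, mul_one_div]
  refine div_le_div₀ (by positivity) ?_ hn (by linarith)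
  rw [abs_le]
  constructor <;> nlinarith [hm.1, hm.2]

end Counts

lemma MapClusterPt.of_dist_tendsto {E : Type*} [PseudoMetricSpace E] {u w : ℕ → E} {p : E}
    (hp : MapClusterPt p atTop u) (h : Tendsto (fun n => dist (u n) (w n)) atTop (𝓝 0)) :
    MapClusterPt p atTop w := by
  rw [mapClusterPt_iff_frequently]
  intro s hs
  obtain ⟨ε, hε, hball⟩ := Metric.mem_nhds_iff.1 hs
  have h1 := hp.frequently (Metric.ball_mem_nhds p (half_pos hε))
  refine (h1.and_eventually (h.eventually_lt_const (half_pos hε))).mono fun n hn => hball ?_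
  have h2 : dist (u n) p < ε / 2 := hn.1
  have := dist_triangle_left (w n) p (u n)
  exact Metric.mem_ball.2 (by linarith [hn.2])

/-- The natural filtration `F_n = σ(X_0, …, X_n)`. -/
def natFilt {Ω : Type*} [m0 : MeasurableSpace Ω] (X : ℕ → Ω → Fin N)
    (hX : ∀ n, Measurable (X n)) : Filtration ℕ m0 where
  seq n := ⨆ k ∈ Finset.range (n + 1), MeasurableSpace.comap (X k) ⊤
  mono' := fun _ _ hmn => biSup_mono fun _ hk =>
    Finset.range_subset_range.2 (Nat.succ_le_succ hmn) hk
  le' := fun _ => iSup₂_le fun k _ => (hX k).comap_le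

lemma measurable_natFilt {Ω : Type*} [MeasurableSpace Ω] (X : ℕ → Ω → Fin N)
    (hX : ∀ n, Measurable (X n)) {k n : ℕ} (hk : k ≤ n) : Measurable[natFilt X hX n] (X k) := by
  rw [measurable_iff_comap_le]
  exact le_iSup₂_of_le (f := fun k (_ : k ∈ Finset.range (n + 1)) =>
    MeasurableSpace.comap (X k) ⊤) k (Finset.mem_range.2 (Nat.lt_succ_of_le hk)) le_rfl

lemma measurable_counts {Ω : Type*} {m : MeasurableSpace Ω} {X : ℕ → Ω → Fin N} {n : ℕ}
    (hX : ∀ k ≤ n, Measurable (X k)) {Z : Fin N → Ω → ℕ}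
    (hZ : ∀ j ω, Z j ω = ((Finset.range (n + 1)).filter fun l => X l ω = j).card) :
    Measurable fun ω j => Z j ω := by
  refine measurable_pi_iff.2 fun j => ?_
  simp only [hZ, Finset.card_filter]
  refine Finset.measurable_fun_sum _ fun k hk => ?_
  exact (measurable_from_top (f := fun y : Fin N => if y = j then 1 else 0)).comp
    (hX k (Nat.lt_succ_iff.1 (Finset.mem_range.1 hk)))

/-- Since the counts take countably many values, any function of `X_n` and `Z_n` is
`F_n`-measurable. -/
lemma measurable_of_counts {Ω : Type*} {m : MeasurableSpace Ω} {X : ℕ → Ω → Fin N} {n : ℕ}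
    (hX : ∀ k ≤ n, Measurable (X k)) {Z : Fin N → Ω → ℕ}
    (hZ : ∀ j ω, Z j ω = ((Finset.range (n + 1)).filter fun l => X l ω = j).card)
    (φ : Fin N → (Fin N → ℕ) → ℝ) :
    Measurable fun ω => φ (X n ω) fun j => Z j ω := by
  have h := (hX n le_rfl).prodMk (measurable_counts hX hZ)
  exact (measurable_of_countable fun y : Fin N × (Fin N → ℕ) => φ y.1 y.2).comp h

end Occupation

/-! ### The limit set -/

/-- Almost surely, the set of limit points of the sequence of empirical
occupation measures `(v_n)` is a connected subset of the equilibria set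
`C = {v ∈ Δ : F(v) = 0}`. -/
theorem limit_set_connected_subset_of_equilibria
    {N : ℕ} (hN : 2 ≤ N) {α : ℝ} (hα : 1 < α)
    (A : Matrix (Fin N) (Fin N) ℝ)
    (hsymm : ∀ i j, A i j = A j i)
    (hnonneg : ∀ i j, 0 ≤ A i j)
    (hoffdiag : ∀ i j, i ≠ j → 0 < A i j)
    (hrow : ∀ i i', ∑ j, A i j = ∑ j, A i' j)
    {Ω : Type*} [MeasurableSpace Ω] (μ : Measure Ω) [IsProbabilityMeasure μ]
    (X : ℕ → Ω → Fin N) (hX : ∀ n, Measurable (X n))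
    (Z : ℕ → Fin N → Ω → ℕ)
    (hZ : ∀ n j ω, Z n j ω = ((Finset.range (n + 1)).filter fun ℓ => X ℓ ω = j).card)
    (hcond : ∀ (n : ℕ) (j : Fin N),
      μ[(fun ω => if X (n + 1) ω = j then (1 : ℝ) else 0) |
          ⨆ k ∈ Finset.range (n + 1), MeasurableSpace.comap (X k) ⊤] =ᵐ[μ]
        fun ω => A (X n ω) j * (1 + (Z n j ω : ℝ)) ^ α /
          ∑ k : Fin N, A (X n ω) k * (1 + (Z n k ω : ℝ)) ^ α) :
    ∀ᵐ ω ∂μ,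
      IsConnected {p : Fin N → ℝ |
        MapClusterPt p atTop fun n : ℕ => fun i => (Z n i ω : ℝ) / ((n : ℝ) + 1)} ∧
      {p : Fin N → ℝ |
        MapClusterPt p atTop fun n : ℕ => fun i => (Z n i ω : ℝ) / ((n : ℝ) + 1)} ⊆
        {v | v ∈ simplexD A ∧ Ffield A α v = 0} := by
  set ℱ := natFilt X hX with hℱ
  have hXℱ : ∀ n, ∀ k ≤ n, Measurable[ℱ n] (X k) := fun n k hk => measurable_natFilt X hX hk
  have hind : ∀ n j, Measurable[ℱ n] fun ω => if X n ω = j then (1 : ℝ) else 0 := fun n j =>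
    (measurable_from_top (f := fun y : Fin N => if y = j then (1 : ℝ) else 0)).comp
      (hXℱ n n le_rfl)
  -- vertices without a loop are almost surely never visited twice in a row
  have hloop : ∀ᵐ ω ∂μ, ∀ n i, A i i = 0 → X n ω = i → X (n + 1) ω ≠ i := by
    rw [ae_all_iff]; intro n
    rw [ae_all_iff]; intro i
    by_cases hi : A i i = 0
    · have hs : MeasurableSet[ℱ n] {ω | X n ω = i} := hXℱ n n le_rfl (measurableSet_singleton i)
      have hs' := ℱ.le n _ hs
      have hInt : Integrable (fun ω => if X (n + 1) ω = i then (1 : ℝ) else 0) μ :=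
        Integrable.of_bound (((hind (n + 1) i).mono (ℱ.le _) le_rfl).aestronglyMeasurable) 1
          (ae_of_all _ fun ω => by split_ifs <;> simp)
      have h1 := setIntegral_condExp (μ := μ) (ℱ.le n) hInt hs
      have h2 : ∫ ω in {ω | X n ω = i},
          (μ[fun ω => if X (n + 1) ω = i then (1 : ℝ) else 0 | ℱ n]) ω ∂μ = 0 := by
        refine setIntegral_eq_zero_of_ae_eq_zero ?_
        filter_upwards [hcond n i] with ω h hω
        have hω' : X n ω = i := hω
        refine h.trans ?_
        simp [hω', hi]
      rw [h2] at h1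
      have h3 := (setIntegral_eq_zero_iff_of_nonneg_ae
        (ae_of_all _ fun ω => by dsimp only [Pi.zero_apply]; split_ifs <;> simp)
        hInt.integrableOn).1 h1.symm
      filter_upwards [(ae_restrict_iff' hs').1 h3] with ω h _ hω hω'
      have := h hω
      simp [hω'] at this
    · exact ae_of_all _ fun ω h => absurd h hi
  obtain ⟨β, hβ, -, -, hdrift, hg, -⟩ := holder_model (α := α) hα hsymm hnonneg hoffdiag
  choose Bg hBg0 hBg using fun j => (hg j).bdd
  classical
  -- The indicator of `Δ` makes the weights bounded everywhere; `w_n ∈ Δ` holds only almost surely.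
  have hmart : ∀ᵐ ω ∂μ, ∀ j, ∃ C, ∀ m, |∑ n ∈ Finset.range m,
      (stepSize N n * (simplexD A).indicator (fun v => poisson A α v j)
        (regOcc N n fun i => Z n i ω)) * ((if X (n + 1) ω = j then (1 : ℝ) else 0) -
        A (X n ω) j * (1 + (Z n j ω : ℝ)) ^ α /
          ∑ k : Fin N, A (X n ω) k * (1 + (Z n k ω : ℝ)) ^ α)| ≤ C := by
    rw [ae_all_iff]; intro j
    refine ae_bounded_weighted_sum ℱ (b := fun n => stepSize N n * Bg j)
      (fun n => hind (n + 1) j) (fun n ω => by split_ifs <;> simp)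
      (fun n => measurable_of_counts (hXℱ n) (hZ n) fun x z =>
        A x j * (1 + (z j : ℝ)) ^ α / ∑ k : Fin N, A x k * (1 + (z k : ℝ)) ^ α)
      (fun n ω => abs_transition_le_one hnonneg (fun i => Z n i ω) _ _)
      (fun n => hcond n j)
      (fun n => measurable_of_counts (hXℱ n) (hZ n) fun _ z =>
        stepSize N n * (simplexD A).indicator (fun v => poisson A α v j) (regOcc N n z))
      (fun n ω => ?_) ?_
    · rw [abs_mul, abs_of_pos (stepSize_pos N n)]
      refine mul_le_mul_of_nonneg_left ?_ (stepSize_pos N n).le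
      by_cases h : regOcc N n (fun i => Z n i ω) ∈ simplexD A
      · rw [indicator_of_mem h]; exact hBg j _ h
      · rw [indicator_of_notMem h, abs_zero]; exact hBg0 j
    · simp only [mul_pow]
      exact (summable_stepSize_sq N).mul_right _
  filter_upwards [hloop, hmart] with ω hω hmω
  have hz : ∀ n j, Z n j ω = ((Finset.range (n + 1)).filter fun l => X l ω = j).card :=
    fun n j => hZ n j ω
  set w : ℕ → Fin N → ℝ := fun n => regOcc N n fun i => Z n i ω with hwdef
  have hw : ∀ n, w n ∈ simplexD A := fun n =>
    regOcc_mem (z := fun n i => Z n i ω) hz hN hω n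
  have hrec : ∀ n i, w (n + 1) i - w n i
      = stepSize N n * ((if X (n + 1) ω = i then 1 else 0) - w n i) := fun n i =>
    regOcc_rec (z := fun n i => Z n i ω) hz n i
  have hsum : Summable fun n => stepSize N n * drift A α (w n) := by
    refine summable_drift (x := fun n => X n ω) hα hsymm hnonneg hoffdiag hw hrec ?_
    choose C hC using hmω
    refine ⟨∑ j, C j, fun m => ?_⟩
    rw [Finset.sum_comm]
    refine (Finset.abs_sum_le_sum_abs _ _).trans (Finset.sum_le_sum fun j _ => ?_)
    refine le_of_eq_of_le (congrArg _ (Finset.sum_congr rfl fun n _ => ?_)) (hC j m)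
    rw [indicator_of_mem (hw n), hwdef, kern_regOcc]
  have hstep : ∀ n, dist (w n) (w (n + 1)) ≤ stepSize N n := fun n =>
    dist_comm (w n) _ ▸ dist_step_le (hw n) (hrec n)
  set v : ℕ → Fin N → ℝ := fun n i => (Z n i ω : ℝ) / ((n : ℝ) + 1) with hv
  have hvw : Tendsto (fun n => dist (v n) (w n)) atTop (𝓝 0) := by
    refine squeeze_zero (fun _ => dist_nonneg)
      (fun n => dist_occ_regOcc (z := fun n i => Z n i ω) hz n) ?_
    simpa using (tendsto_one_div_add_atTop_nhds_zero_nat (𝕜 := ℝ)).const_mul ((N : ℝ) + 1)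
  have hγ0 : Tendsto (stepSize N) atTop (𝓝 0) := by
    have := (summable_stepSize_sq N).tendsto_atTop_zero
    have h2 := this.sqrt
    simpa [Real.sqrt_sq (stepSize_pos N _).le] using h2
  refine ⟨clusterSet_isConnected (isCompact_univ_pi fun _ : Fin N =>
    isCompact_Icc (a := (0 : ℝ)) (b := 1))
    (fun n i _ => occ_mem_Icc (z := fun n i => Z n i ω) hz n i) ?_, fun p hp => ?_⟩
  · have hlim := ((hvw.comp (tendsto_add_atTop_nat 1)).add hγ0).add hvw
    simp only [add_zero] at hlim
    refine squeeze_zero (fun _ => dist_nonneg) (fun n => ?_) hlim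
    have h1 := dist_triangle4 (v (n + 1)) (w (n + 1)) (w n) (v n)
    rw [dist_comm (w n) (v n), dist_comm (w (n + 1)) (w n)] at h1
    exact h1.trans (by simp only [Function.comp]; linarith [hstep n])
  · have hpw : MapClusterPt p atTop w := MapClusterPt.of_dist_tendsto hp hvw
    have hpD : p ∈ simplexD A := by
      by_contra hnot
      obtain ⟨n, hn⟩ := (hpw.frequently (isClosed_simplexD.isOpen_compl.mem_nhds hnot)).exists
      exact hn (hw n)
    exact ⟨hpD, Ffield_eq_zero_of_drift hα hnonneg hoffdiag hpD
      (eq_zero_of_mapClusterPt (hdrift.continuousOn hβ)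
        (fun v hv => drift_nonneg hα hnonneg hoffdiag hv) hw (fun n => (stepSize_pos N n).le)
        hstep (not_summable_stepSize N) hsum hpD hpw)⟩
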